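/- arXiv:2112.12246 — 6 statements merged into one kernel-verified Lean document; each statement's English description precedes it below -/
import Mathlib

section
/- Let $X$ and $Y$ be Tychonoff topological spaces of countable netweight, and let $Z$ be a Tychonoff space that admits a perfect map onto a separable metric space. If $C_p(X\times Z)$ is homeomorphic to $C_p(Y\times Z)$, then there exists a separable metrizable space $M$ which is the image of $Z$ under a perfect map such that $C_p(X\times M)$ is homeomorphic to $C_p(Y\times M)$. -/
open TopologicalSpace Function Set Topology

/-- `Cp X`: continuous real-valued functions on `X` with the topology of pointwise
convergence (subspace topology from the product `ℝ^X`). -/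
abbrev Cp (X : Type*) [TopologicalSpace X] : Type _ := {f : X → ℝ // Continuous f}

/-- A space has countable netweight if it has a countable network. -/
def HasCountableNetweight (X : Type*) [TopologicalSpace X] : Prop :=
  ∃ S : Set (Set X), S.Countable ∧
    ∀ x : X, ∀ U : Set X, IsOpen U → x ∈ U → ∃ s ∈ S, x ∈ s ∧ s ⊆ U

/-- A map is perfect if it is continuous, closed, and has compact fibers. -/
def IsPerfectMap {α β : Type*} [TopologicalSpace α] [TopologicalSpace β] (f : α → β) : Prop :=
  Continuous f ∧ IsClosedMap f ∧ ∀ b : β, IsCompact (f ⁻¹' {b})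

/-- A space is countably compact if every countable open cover has a finite subcover. -/
def CountablyCompact (X : Type*) [TopologicalSpace X] : Prop :=
  ∀ U : ℕ → Set X, (∀ n, IsOpen (U n)) → (⋃ n, U n) = Set.univ →
    ∃ t : Finset ℕ, (⋃ n ∈ t, U n) = Set.univ

universe u

/-- A space of countable netweight is a continuous image of a second countable space. -/
lemma HasCountableNetweight.exists_secondCountable {X : Type u} [TopologicalSpace X]
    (hX : HasCountableNetweight X) :
    ∃ (X' : Type u) (_ : TopologicalSpace X'), SecondCountableTopology X' ∧
      ∃ e : X' → X, Continuous e ∧ Surjective e := by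
  obtain ⟨N, hN, hnet⟩ := hX
  let t : TopologicalSpace X := generateFrom N
  refine ⟨X, t, ⟨N, hN, rfl⟩, id, ?_, surjective_id⟩
  refine continuous_def.2 fun U hU => isOpen_iff_forall_mem_open.2 fun x hx => ?_
  obtain ⟨s, hs, hxs, hsU⟩ := hnet x U hU hx
  exact ⟨s, hsU, isOpen_generateFrom_of_mem hs, hxs⟩

/-- A proper preimage of a Lindelöf space is Lindelöf. -/
lemma IsProperMap.lindelofSpace {B W : Type*} [TopologicalSpace B] [TopologicalSpace W]
    [LindelofSpace W] {f : B → W} (hf : IsProperMap f) : LindelofSpace B := by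
  refine ⟨fun F _ _ _ => ?_⟩
  obtain ⟨w, -, hw⟩ := isLindelof_univ (X := W) (f := Filter.map f F) (by simp)
  obtain ⟨x, -, hx⟩ := hf.clusterPt_of_mapClusterPt hw
  exact ⟨x, mem_univ x, hx⟩

/-- The product of a space of countable netweight with a proper preimage of a second countable
space is Lindelöf. -/
lemma HasCountableNetweight.lindelofSpace_prod {X Z S : Type u} [TopologicalSpace X]
    [TopologicalSpace Z] [TopologicalSpace S] [SecondCountableTopology S]
    (hX : HasCountableNetweight X) {g : Z → S} (hg : IsProperMap g) : LindelofSpace (X × Z) := by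
  obtain ⟨X', _, _, e, he, hes⟩ := hX.exists_secondCountable
  have : LindelofSpace (X' × Z) :=
    ((Homeomorph.refl X').isProperMap.prodMap hg).lindelofSpace
  have hc : Continuous (Prod.map e (id : Z → Z)) := he.prodMap continuous_id
  rw [← isLindelof_univ_iff, ← (hes.prodMap surjective_id).range_eq]
  exact isLindelof_range hc

/-- In a Tychonoff space, continuous functions take arbitrary values on a finite set. -/
lemma exists_continuous_eqOn_finite {W : Type*} [TopologicalSpace W] [T35Space W] {T : Set W}
    (hT : T.Finite) (v : W → ℝ) : ∃ f : W → ℝ, Continuous f ∧ EqOn f v T := by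
  have : Finite T := hT
  have he : IsClosedEmbedding fun t : T => stoneCechUnit (t : W) := by
    refine .of_continuous_injective_isClosedMap
      (continuous_stoneCechUnit.comp continuous_subtype_val)
      (isDenseEmbedding_stoneCechUnit.injective.comp Subtype.val_injective) ?_
    exact fun s _ => (s.toFinite.image _).isClosed
  obtain ⟨f, hf⟩ :=
    ContinuousMap.exists_extension he ⟨fun t : T => v t, continuous_of_discreteTopology⟩
  refine ⟨f ∘ stoneCechUnit, f.continuous.comp continuous_stoneCechUnit, fun t ht => ?_⟩
  exact DFunLike.congr_fun hf ⟨t, ht⟩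

/-- A function belongs to the pointwise closure of a set as soon as it agrees on every finite set
up to prescribed open neighbourhoods with some member of that set. -/
lemma Cp.mem_closure {B : Type*} [TopologicalSpace B] {D : Set (Cp B)} {F : Cp B}
    (h : ∀ (T : Finset B) (U : B → Set ℝ), (∀ b, IsOpen (U b)) → (∀ b, F.1 b ∈ U b) →
      ∃ G ∈ D, ∀ b ∈ T, G.1 b ∈ U b) : F ∈ closure D := by
  rw [closure_subtype, mem_closure_iff]
  intro O hO hFO
  obtain ⟨T, U, hU, hUO⟩ := isOpen_pi_iff.1 hO _ hFO
  classical
  obtain ⟨G, hG, hGT⟩ := h T (fun b => if b ∈ T then U b else univ)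
    (fun b => by by_cases hb : b ∈ T <;> simp [hb, hU])
    (fun b => by by_cases hb : b ∈ T <;> simp [hb, hU])
  refine ⟨G.1, hUO fun b hb => ?_, G, hG, rfl⟩
  have := hGT b hb
  rwa [if_pos (Finset.mem_coe.1 hb)] at this

/-- If countably many sets serve as a network for the preimages of open sets under all members of
`E`, then `E` has a countable pointwise dense subset. -/
lemma Cp.exists_countable_dense_of_network {B : Type*} [TopologicalSpace B] {N : Set (Set B)}
    (hN : N.Countable) {E : Set (Cp B)}
    (hE : ∀ F ∈ E, ∀ b, ∀ U, IsOpen U → F.1 b ∈ U → ∃ s ∈ N, b ∈ s ∧ MapsTo F.1 s U) :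
    ∃ D ⊆ E, D.Countable ∧ E ⊆ closure D := by
  obtain ⟨V, hV, -, hVb⟩ := exists_countable_basis ℝ
  let W : Set (Set B × Set ℝ) → Set (Cp B) := fun t => {F ∈ E | ∀ p ∈ t, MapsTo F.1 p.1 p.2}
  have hcount : {t : Set (Set B × Set ℝ) | t.Finite ∧ t ⊆ N ×ˢ V}.Countable :=
    countable_ofPred_finite_subset (hN.prod hV)
  have : Nonempty (Cp B) := ⟨⟨0, continuous_const⟩⟩
  choose! G hG using fun (t : Set (Set B × Set ℝ)) (ht : (W t).Nonempty) => ht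
  refine ⟨G '' {t | (t.Finite ∧ t ⊆ N ×ˢ V) ∧ (W t).Nonempty}, ?_,
    (hcount.mono fun t ht => ht.1).image G, fun F hF => Cp.mem_closure fun T U hU hFU => ?_⟩
  · rintro _ ⟨t, ht, rfl⟩
    exact (hG t ht.2).1
  · choose I hIV hFI hIU using fun b => hVb.exists_subset_of_mem_open (hFU b) (hU b)
    choose s hs hbs hsI using fun b => hE F hF b (I b) (hVb.isOpen (hIV b)) (hFI b)
    let t : Set (Set B × Set ℝ) := (fun b => (s b, I b)) '' (T : Set B)
    have hFt : F ∈ W t := by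
      refine ⟨hF, ?_⟩
      rintro _ ⟨b, -, rfl⟩
      exact hsI b
    have htN : t ⊆ N ×ˢ V := by
      rintro _ ⟨b, -, rfl⟩
      exact ⟨hs b, hIV b⟩
    refine ⟨G t, ⟨t, ⟨⟨T.finite_toSet.image _, htN⟩, F, hFt⟩, rfl⟩, fun b hb => hIU b ?_⟩
    exact (hG t ⟨F, hFt⟩).2 _ ⟨b, hb, rfl⟩ (hbs b)

/-- The continuous functions on `X × Z` that are constant on the fibers of `id × p`. -/
def fiberwiseConst (X : Type*) {Z M : Type*} [TopologicalSpace X] [TopologicalSpace Z]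
    (p : Z → M) : Set (Cp (X × Z)) :=
  {F | ∀ x z z', p z = p z' → F.1 (x, z) = F.1 (x, z')}

lemma isClosed_fiberwiseConst (X : Type*) {Z M : Type*} [TopologicalSpace X] [TopologicalSpace Z]
    (p : Z → M) : IsClosed (fiberwiseConst X p) := by
  simp only [fiberwiseConst, ofPred_forall]
  refine isClosed_iInter fun x => isClosed_iInter fun z => isClosed_iInter fun z' =>
    isClosed_iInter fun _ => isClosed_eq ?_ ?_
  · exact (continuous_apply _).comp continuous_subtype_val
  · exact (continuous_apply _).comp continuous_subtype_val

/-- Composition with `id × p`, as a map between function spaces. -/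
def Cp.pullback (X : Type*) {Z M : Type*} [TopologicalSpace X] [TopologicalSpace Z]
    [TopologicalSpace M] {p : Z → M} (hp : Continuous p) (F : Cp (X × M)) : Cp (X × Z) :=
  ⟨F.1 ∘ Prod.map id p, F.2.comp (continuous_id.prodMap hp)⟩

lemma Cp.isEmbedding_pullback (X : Type*) {Z M : Type*} [TopologicalSpace X]
    [TopologicalSpace Z] [TopologicalSpace M] {p : Z → M} (hp : Continuous p)
    (hs : Surjective p) : IsEmbedding (Cp.pullback X hp) := by
  have hsurj : Surjective (Prod.map (id : X → X) p) := surjective_id.prodMap hs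
  have hcont : Continuous (Cp.pullback X hp) := by
    refine Continuous.subtype_mk (continuous_pi fun b => ?_) _
    exact (continuous_apply (Prod.map id p b)).comp continuous_subtype_val
  refine ⟨.of_comp hcont continuous_subtype_val ?_, fun F G h => Subtype.ext ?_⟩
  · obtain ⟨r, hr⟩ := hsurj.hasRightInverse
    have hcomp : Continuous fun H : X × Z → ℝ => H ∘ r :=
      continuous_pi fun b => continuous_apply (r b)
    refine .of_comp (continuous_subtype_val.comp hcont) hcomp ?_
    have hval : (fun H : X × Z → ℝ => H ∘ r) ∘ Subtype.val ∘ Cp.pullback X hp = Subtype.val :=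
      funext fun F => funext fun b => congrArg F.1 (hr b)
    rw [hval]
    exact ⟨rfl⟩
  · exact hsurj.injective_comp_right (congrArg Subtype.val h)

lemma Cp.range_pullback (X : Type*) {Z M : Type*} [TopologicalSpace X]
    [TopologicalSpace Z] [TopologicalSpace M] {p : Z → M} (hp : IsProperMap p)
    (hs : Surjective p) : range (Cp.pullback X hp.continuous) = fiberwiseConst X p := by
  have hprop : IsProperMap (Prod.map (id : X → X) p) :=
    (Homeomorph.refl X).isProperMap.prodMap hp
  have hq : IsQuotientMap (Prod.map (id : X → X) p) :=
    hprop.isClosedMap.isQuotientMap hprop.continuous (surjective_id.prodMap hs)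
  refine Subset.antisymm ?_ fun F hF => ?_
  · rintro _ ⟨F, rfl⟩ x z z' h
    simp [Cp.pullback, h]
  · obtain ⟨r, hr⟩ := hs.hasRightInverse
    have hFr : (fun b : X × M => F.1 (b.1, r b.2)) ∘ Prod.map (id : X → X) p = F.1 := by
      funext b
      exact hF b.1 _ _ (hr (p b.2))
    exact ⟨⟨fun b => F.1 (b.1, r b.2), hq.continuous_iff.2 (hFr.symm.subst (motive := Continuous) F.2)⟩, Subtype.ext hFr⟩

/-- The functions constant along a proper map onto a second countable space form a separable
set. -/
lemma HasCountableNetweight.exists_countable_dense_fiberwiseConst {X Z M : Type*}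
    [TopologicalSpace X] [TopologicalSpace Z] [TopologicalSpace M] [SecondCountableTopology M]
    (hX : HasCountableNetweight X) {p : Z → M} (hp : IsProperMap p) (hs : Surjective p) :
    ∃ D ⊆ fiberwiseConst X p, D.Countable ∧ fiberwiseConst X p ⊆ closure D := by
  obtain ⟨N, hN, hnet⟩ := hX
  obtain ⟨V, hV, -, hVb⟩ := exists_countable_basis M
  refine Cp.exists_countable_dense_of_network
    ((hN.prod hV).image fun q => q.1 ×ˢ (p ⁻¹' q.2)) fun F hF b U hU hb => ?_
  rw [← Cp.range_pullback X hp hs] at hF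
  obtain ⟨G, rfl⟩ := hF
  obtain ⟨u, v, hu, hv, hbu, hbv, huv⟩ :=
    isOpen_prod_iff.1 (hU.preimage G.2) b.1 (p b.2) hb
  obtain ⟨s, hsN, hbs, hsu⟩ := hnet _ u hu hbu
  obtain ⟨w, hwV, hbw, hwv⟩ := hVb.exists_subset_of_mem_open hbv hv
  refine ⟨_, ⟨(s, w), ⟨hsN, hwV⟩, rfl⟩, ⟨hbs, hbw⟩, fun c hc => ?_⟩
  exact huv ⟨hsu hc.1, hwv hc.2⟩

/-- The diagonal product of `g` and the functions in `A`, corestricted to its range. -/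
def diagonalMap {Z S : Type*} [TopologicalSpace Z] (g : Z → S) (A : Set C(Z, ℝ)) :
    Z → range fun z => (g z, fun f : A => f.1 z) :=
  rangeFactorization _

lemma diagonalMap_eq_iff {Z S : Type*} [TopologicalSpace Z] {g : Z → S} {A : Set C(Z, ℝ)}
    {z z' : Z} : diagonalMap g A z = diagonalMap g A z' ↔ g z = g z' ∧ ∀ f ∈ A, f z = f z' := by
  simp [diagonalMap, rangeFactorization, Subtype.ext_iff, funext_iff]

lemma isProperMap_diagonalMap {Z S : Type*} [TopologicalSpace Z] [TopologicalSpace S] [T2Space S]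
    {g : Z → S} (hg : IsProperMap g) (A : Set C(Z, ℝ)) : IsProperMap (diagonalMap g A) := by
  refine isProperMap_of_comp_of_t2 (g := fun m => m.1.1) ?_
    (continuous_fst.comp continuous_subtype_val) hg
  exact Continuous.subtype_mk
    (hg.continuous.prodMk (continuous_pi fun f => f.1.continuous)) _

lemma surjective_diagonalMap {Z S : Type*} [TopologicalSpace Z] (g : Z → S) (A : Set C(Z, ℝ)) :
    Surjective (diagonalMap g A) :=
  rangeFactorization_surjective

lemma fiberwiseConst_diagonalMap_mono (X : Type*) {Z S : Type*} [TopologicalSpace X]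
    [TopologicalSpace Z] (g : Z → S) {A B : Set C(Z, ℝ)} (h : A ⊆ B) :
    fiberwiseConst X (diagonalMap g A) ⊆ fiberwiseConst X (diagonalMap g B) := by
  intro F hF x z z' hz
  rw [diagonalMap_eq_iff] at hz
  exact hF x z z' (diagonalMap_eq_iff.2 ⟨hz.1, fun f hf => hz.2 f (h hf)⟩)

/-- On a Lindelöf product `X × Z` with `Z` Tychonoff, every continuous function is determined by
countably many continuous functions on `Z`. -/
lemma exists_countable_mem_fiberwiseConst {X Z S : Type*} [TopologicalSpace X]
    [TopologicalSpace Z] [CompletelyRegularSpace Z] [LindelofSpace (X × Z)] (g : Z → S)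
    (F : Cp (X × Z)) :
    ∃ A : Set C(Z, ℝ), A.Countable ∧ F ∈ fiberwiseConst X (diagonalMap g A) := by
  have key : ∀ q r : ℚ, q < r → ∃ A : Set C(Z, ℝ), A.Countable ∧ ∀ x z z',
      (∀ f ∈ A, f z = f z') → F.1 (x, z) ≤ q → F.1 (x, z') < r := by
    intro q r hqr
    have hbox : ∀ b ∈ {b | F.1 b ≤ q}, ∃ (u : Set X) (f : C(Z, ℝ)), IsOpen u ∧ b.1 ∈ u ∧
        f b.2 ≠ 1 ∧ ∀ x ∈ u, ∀ z, f z ≠ 1 → F.1 (x, z) < r := by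
      intro b hb
      have hbr : F.1 b < r := lt_of_le_of_lt hb (by exact_mod_cast hqr)
      obtain ⟨u, v, hu, hv, hbu, hbv, huv⟩ :=
        isOpen_prod_iff.1 (isOpen_lt F.2 continuous_const) b.1 b.2 hbr
      obtain ⟨f, hf, hf0, hf1⟩ :=
        CompletelyRegularSpace.completely_regular_isOpen b.2 v hv hbv
      refine ⟨u, ⟨fun z => f z, continuous_subtype_val.comp hf⟩, hu, hbu, by simp [hf0],
        fun x hx z hz => huv ⟨hx, ?_⟩⟩
      by_contra hzv
      exact hz (by simp [hf1 hzv])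
    choose! u f hu hbu hfb hlt using hbox
    have hlin : IsLindelof {b | F.1 b ≤ q} := (isClosed_le F.2 continuous_const).isLindelof
    obtain ⟨t, htc, hts, htcov⟩ := hlin.elim_nhds_subcover
      (fun b => {c : X × Z | b ∈ {b | F.1 b ≤ q} → c.1 ∈ u b ∧ f b c.2 ≠ 1}) fun b hb => by
        refine IsOpen.mem_nhds ?_ fun _ => ⟨hbu b hb, hfb b hb⟩
        have : {c : X × Z | b ∈ {b | F.1 b ≤ q} → c.1 ∈ u b ∧ f b c.2 ≠ 1} =
            u b ×ˢ {z | f b z ≠ 1} := by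
          ext c
          exact ⟨fun h => h hb, fun h _ => h⟩
        rw [this]
        exact (hu b hb).prod (isOpen_ne_fun (f b).continuous continuous_const)
    refine ⟨f '' t, htc.image f, fun x z z' hzz' hxz => ?_⟩
    obtain ⟨b, hbt, hb⟩ := mem_iUnion₂.1 (htcov hxz)
    obtain ⟨hx, hz⟩ := hb (hts b hbt)
    exact hlt b (hts b hbt) x hx z' (hzz' _ ⟨b, hbt, rfl⟩ ▸ hz)
  choose! A hA hAlt using key
  refine ⟨⋃ (q : ℚ) (r : ℚ) (_ : q < r), A q r, countable_iUnion fun q => countable_iUnion fun r =>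
    countable_iUnion fun h => hA q r h, fun x z z' hz => ?_⟩
  have hle : ∀ z z', (∀ f ∈ ⋃ (q : ℚ) (r : ℚ) (_ : q < r), A q r, f z = f z') →
      F.1 (x, z') ≤ F.1 (x, z) := by
    intro z z' h
    by_contra! hlt
    obtain ⟨q, hq, hq'⟩ := exists_rat_btwn hlt
    obtain ⟨r, hr, hr'⟩ := exists_rat_btwn hq'
    have hqr : q < r := by exact_mod_cast hr
    refine absurd (hAlt q r hqr x z z' (fun f hf => h f ?_) hq.le) hr'.not_gt
    exact mem_iUnion₂.2 ⟨q, r, mem_iUnion.2 ⟨hqr, hf⟩⟩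
  have hz' := (diagonalMap_eq_iff.1 hz).2
  exact le_antisymm (hle z' z fun f hf => (hz' f hf).symm) (hle z z' hz')

/-- Functions constant along the diagonal map of an increasing union are pointwise limits of
functions constant along the diagonal maps of its pieces. -/
lemma fiberwiseConst_iUnion_subset_closure {X Z S : Type*} [TopologicalSpace X] [T35Space X]
    [TopologicalSpace Z] [TopologicalSpace S] [T35Space S] {g : Z → S} (hg : IsProperMap g)
    {A : ℕ → Set C(Z, ℝ)} (hA : Monotone A) :
    fiberwiseConst X (diagonalMap g (⋃ n, A n)) ⊆
      closure (⋃ n, fiberwiseConst X (diagonalMap g (A n))) := by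
  intro F hF
  refine Cp.mem_closure fun T U _ hFU => ?_
  have hsep : ∀ z z' : Z, ∃ n, ∀ m ≥ n, diagonalMap g (A m) z = diagonalMap g (A m) z' →
      diagonalMap g (⋃ n, A n) z = diagonalMap g (⋃ n, A n) z' := by
    intro z z'
    by_cases h : diagonalMap g (⋃ n, A n) z = diagonalMap g (⋃ n, A n) z'
    · exact ⟨0, fun _ _ _ => h⟩
    · by_contra! hcon
      refine h (diagonalMap_eq_iff.2 ⟨?_, fun f hf => ?_⟩)
      · obtain ⟨m, -, hm, -⟩ := hcon 0
        exact (diagonalMap_eq_iff.1 hm).1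
      · obtain ⟨n, hn⟩ := mem_iUnion.1 hf
        obtain ⟨m, hnm, hm, -⟩ := hcon n
        exact (diagonalMap_eq_iff.1 hm).2 f (hA hnm hn)
  choose n hn using hsep
  let k := (T ×ˢ T).sup fun b => n b.1.2 b.2.2
  have hT35 : T35Space (S × (A k → ℝ)) := {}
  have hT35' : T35Space (X × range fun z => (g z, fun f : A k => f.1 z)) := {}
  let π : X × Z → X × range fun z => (g z, fun f : A k => f.1 z) :=
    Prod.map id (diagonalMap g (A k))
  have hfac : ∀ b ∈ T, ∀ c ∈ T, π b = π c → F.1 b = F.1 c := by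
    rintro ⟨x, z⟩ hb ⟨x', z'⟩ hc h
    obtain ⟨rfl, h⟩ := Prod.ext_iff.1 h
    refine hF x z z' (hn z z' k ?_ h)
    exact Finset.le_sup (f := fun b : (X × Z) × (X × Z) => n b.1.2 b.2.2)
      (Finset.mk_mem_product hb hc)
  let v : X × (range fun z => (g z, fun f : A k => f.1 z)) → ℝ :=
    extend (fun b : T => π b) (fun b : T => F.1 b) 0
  obtain ⟨G, hG, hGv⟩ := exists_continuous_eqOn_finite (T.finite_toSet.image π) v
  have hp := isProperMap_diagonalMap hg (A k)
  refine ⟨Cp.pullback X hp.continuous ⟨G, hG⟩, mem_iUnion.2 ⟨k, ?_⟩, fun b hb => ?_⟩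
  · rw [← Cp.range_pullback X hp (surjective_diagonalMap g (A k))]
    exact mem_range_self _
  · have hval : v (π b) = F.1 b :=
      FactorsThrough.extend_apply (f := fun b : T => π b) (g := fun b : T => F.1 b)
        (fun b c h => hfac b b.2 c c.2 h) 0 ⟨b, hb⟩
    have : (Cp.pullback X hp.continuous ⟨G, hG⟩).1 b = F.1 b :=
      (hGv (mem_image_of_mem π hb)).trans hval
    exact this ▸ hFU b

/-- A continuous map between function spaces sends the functions determined by countably many
functions on `Z` to functions determined by countably many functions on `Z`. -/
lemma exists_countable_mapsTo_fiberwiseConst {X Y Z S : Type u} [TopologicalSpace X]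
    [TopologicalSpace Y] [TopologicalSpace Z] [TopologicalSpace S] [CompletelyRegularSpace Z]
    [SecondCountableTopology S] [T2Space S] (hX : HasCountableNetweight X)
    (hY : HasCountableNetweight Y) {g : Z → S} (hg : IsProperMap g)
    {φ : Cp (X × Z) → Cp (Y × Z)} (hφ : Continuous φ) {A : Set C(Z, ℝ)} (hA : A.Countable) :
    ∃ B : Set C(Z, ℝ), B.Countable ∧
      MapsTo φ (fiberwiseConst X (diagonalMap g A)) (fiberwiseConst Y (diagonalMap g B)) := by
  have := hA.to_subtype
  have := hY.lindelofSpace_prod hg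
  obtain ⟨D, -, hD, hdense⟩ := hX.exists_countable_dense_fiberwiseConst
    (isProperMap_diagonalMap hg A) (surjective_diagonalMap g A)
  choose B hB hmem using exists_countable_mem_fiberwiseConst (X := Y) g
  refine ⟨⋃ d ∈ D, B (φ d), hD.biUnion fun d _ => hB _, fun F hF => ?_⟩
  have hDB : MapsTo φ D (fiberwiseConst Y (diagonalMap g (⋃ d ∈ D, B (φ d)))) := fun d hd =>
    fiberwiseConst_diagonalMap_mono Y g (subset_biUnion_of_mem (u := fun d => B (φ d)) hd)
      (hmem (φ d))
  exact (isClosed_fiberwiseConst Y _).closure_subset (hDB.closure hφ (hdense hF))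

/-- A continuous map that sends each piece of an increasing sequence of function sets to the next
one preserves the functions determined by the union. -/
lemma mapsTo_fiberwiseConst_iUnion {X Y Z S : Type*} [TopologicalSpace X] [T35Space X]
    [TopologicalSpace Y] [TopologicalSpace Z] [TopologicalSpace S] [T35Space S] {g : Z → S}
    (hg : IsProperMap g) {φ : Cp (X × Z) → Cp (Y × Z)} (hφ : Continuous φ)
    {A : ℕ → Set C(Z, ℝ)} (hA : Monotone A)
    (h : ∀ n, MapsTo φ (fiberwiseConst X (diagonalMap g (A n)))
      (fiberwiseConst Y (diagonalMap g (A (n + 1))))) :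
    MapsTo φ (fiberwiseConst X (diagonalMap g (⋃ n, A n)))
      (fiberwiseConst Y (diagonalMap g (⋃ n, A n))) := by
  intro F hF
  have hU : MapsTo φ (⋃ n, fiberwiseConst X (diagonalMap g (A n)))
      (fiberwiseConst Y (diagonalMap g (⋃ n, A n))) :=
    mapsTo_iUnion.2 fun n _ hG =>
      fiberwiseConst_diagonalMap_mono Y g (subset_iUnion A (n + 1)) (h n hG)
  exact (isClosed_fiberwiseConst Y _).closure_subset
    (hU.closure hφ (fiberwiseConst_iUnion_subset_closure hg hA hF))

/-- If `X` and `Y` are Tychonoff spaces of countable netweight and `Z` is a Tychonoff space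
admitting a perfect map onto a separable metrizable space, and `Cp (X × Z)` is homeomorphic to
`Cp (Y × Z)`, then there is a separable metrizable perfect image `M` of `Z` with
`Cp (X × M)` homeomorphic to `Cp (Y × M)`. -/
theorem stmt0 {X Y Z : Type u} [TopologicalSpace X] [TopologicalSpace Y] [TopologicalSpace Z]
    [T35Space X] [T35Space Y] [T35Space Z]
    (hX : HasCountableNetweight X) (hY : HasCountableNetweight Y)
    (hZ : ∃ (S : Type u) (tS : TopologicalSpace S), MetrizableSpace S ∧ SeparableSpace S ∧
      ∃ g : Z → S, Function.Surjective g ∧ IsPerfectMap g)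
    (h : Nonempty (Cp (X × Z) ≃ₜ Cp (Y × Z))) :
    ∃ (M : Type u) (tM : TopologicalSpace M), MetrizableSpace M ∧ SeparableSpace M ∧
      (∃ g : Z → M, Function.Surjective g ∧ IsPerfectMap g) ∧
      Nonempty (Cp (X × M) ≃ₜ Cp (Y × M)) := by
  obtain ⟨S, _, _, _, g, -, hgc, hgcl, hgk⟩ := hZ
  obtain ⟨φ⟩ := h
  have hg : IsProperMap g := isProperMap_iff_isClosedMap_and_compact_fibers.2 ⟨hgc, hgcl, hgk⟩
  have : SecondCountableTopology S := by
    let := metrizableSpaceMetric S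
    exact UniformSpace.secondCountable_of_separable S
  have step : ∀ A : {A : Set C(Z, ℝ) // A.Countable}, ∃ B : {A : Set C(Z, ℝ) // A.Countable},
      A.1 ⊆ B.1 ∧
      MapsTo φ (fiberwiseConst X (diagonalMap g A.1)) (fiberwiseConst Y (diagonalMap g B.1)) ∧
      MapsTo φ.symm (fiberwiseConst Y (diagonalMap g A.1))
        (fiberwiseConst X (diagonalMap g B.1)) := by
    rintro ⟨A, hA⟩
    obtain ⟨B, hB, hφB⟩ := exists_countable_mapsTo_fiberwiseConst hX hY hg φ.continuous hA
    obtain ⟨C, hC, hφC⟩ := exists_countable_mapsTo_fiberwiseConst hY hX hg φ.symm.continuous hA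
    refine ⟨⟨A ∪ B ∪ C, (hA.union hB).union hC⟩, fun f hf => Or.inl (Or.inl hf),
      hφB.mono_right ?_, hφC.mono_right ?_⟩
    · exact fiberwiseConst_diagonalMap_mono Y g fun f hf => Or.inl (Or.inr hf)
    · exact fiberwiseConst_diagonalMap_mono X g fun f hf => Or.inr hf
  choose next hsub hnext hnext' using step
  let A : ℕ → {A : Set C(Z, ℝ) // A.Countable} := fun n => next^[n] ⟨∅, countable_empty⟩
  have hA : ∀ n, A (n + 1) = next (A n) := fun n => iterate_succ_apply' next n _
  have hmono : Monotone fun n => (A n).1 :=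
    monotone_nat_of_le_succ fun n => (hA n).symm ▸ hsub (A n)
  let L : Set C(Z, ℝ) := ⋃ n, (A n).1
  have : Countable L := (countable_iUnion fun n => (A n).2).to_subtype
  have hφ : MapsTo φ (fiberwiseConst X (diagonalMap g L)) (fiberwiseConst Y (diagonalMap g L)) :=
    mapsTo_fiberwiseConst_iUnion hg φ.continuous hmono fun n => (hA n).symm ▸ hnext (A n)
  have hφ' : MapsTo φ.symm (fiberwiseConst Y (diagonalMap g L))
      (fiberwiseConst X (diagonalMap g L)) :=
    mapsTo_fiberwiseConst_iUnion hg φ.symm.continuous hmono fun n => (hA n).symm ▸ hnext' (A n)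
  have himage : φ '' fiberwiseConst X (diagonalMap g L) = fiberwiseConst Y (diagonalMap g L) :=
    Subset.antisymm hφ.image_subset fun G hG => ⟨φ.symm G, hφ' hG, φ.apply_symm_apply G⟩
  have hp := isProperMap_diagonalMap hg L
  have hs := surjective_diagonalMap g L
  refine ⟨range fun z => (g z, fun f : L => f.1 z), inferInstance, inferInstance, inferInstance,
    ⟨diagonalMap g L, hs, isProperMap_iff_isClosedMap_and_compact_fibers.1 hp⟩, ⟨?_⟩⟩
  exact (Cp.isEmbedding_pullback X hp.continuous hs).toHomeomorph.trans <|
    (Homeomorph.setCongr (Cp.range_pullback X hp hs)).trans <|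
    (φ.image _).trans <| (Homeomorph.setCongr (himage.trans (Cp.range_pullback Y hp hs).symm)).trans
    (Cp.isEmbedding_pullback Y hp.continuous hs).toHomeomorph.symm
end

section
/- Let $X$ be a separable topological space, $Z$ a topological space, and $f:X\times Z\to \mathbb{R}^{\omega}$ a perfect map. Then there exist a continuous map $F_1: Z\to \mathbb{R}^{\omega}$ and a continuous map $F_2: X\times F_1(Z)\to \mathbb{R}^{\omega}$ such that $f=F_2\circ (\mathrm{id}_X\times F_1)$, where $F_1(Z)$ carries the subspace topology from $\mathbb{R}^{\omega}$ and $(\mathrm{id}_X\times F_1)(x,z)=(x,F_1(z))$. -/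
open TopologicalSpace Function Set Topology

/-- The slice `f (x, ·)` of a proper map on a product with `T1` first factor is proper. -/
theorem IsProperMap.slice_right {X Z Y : Type*} [TopologicalSpace X] [TopologicalSpace Z]
    [TopologicalSpace Y] [T1Space X] {f : X × Z → Y} (hf : IsProperMap f) (x : X) :
    IsProperMap fun z => f (x, z) := by
  have hemb : IsClosedEmbedding fun z : Z => (x, z) := by
    refine ⟨isEmbedding_prodMkRight x, ?_⟩
    have : range (fun z : Z => (x, z)) = Prod.fst ⁻¹' {x} := by
      ext ⟨a, b⟩
      simp [eq_comm]
    rw [this]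
    exact isClosed_singleton.preimage continuous_fst
  exact hf.comp hemb.isProperMap

/-- Factorization lemma: a perfect map `f : X × Z → ℝ^ω` with `X` separable factors as
`F₂ ∘ (id_X × F₁)` through `X × F₁(Z)`. -/
theorem stmt3 {X Z : Type*} [TopologicalSpace X] [TopologicalSpace Z]
    [T35Space X] [T35Space Z] [SeparableSpace X]
    (f : X × Z → ℕ → ℝ) (hf : IsPerfectMap f) :
    ∃ F₁ : Z → ℕ → ℝ, Continuous F₁ ∧
      ∃ F₂ : X × (Set.range F₁) → ℕ → ℝ, Continuous F₂ ∧
        ∀ (x : X) (z : Z), f (x, z) = F₂ (x, ⟨F₁ z, ⟨z, rfl⟩⟩) := by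
  obtain ⟨hcont, hclosed, hcompact⟩ := hf
  have hproper : IsProperMap f :=
    isProperMap_iff_isClosedMap_and_compact_fibers.2 ⟨hcont, hclosed, hcompact⟩
  rcases isEmpty_or_nonempty X with hX | hX
  · exact ⟨fun _ _ => 0, continuous_const, fun _ _ => 0, continuous_const, fun x => hX.elim x⟩
  let F₁ : Z → ℕ → ℝ := fun z n => f (denseSeq X n.unpair.1, z) n.unpair.2
  have hF₁ : Continuous F₁ := by
    refine continuous_pi fun n => ?_
    exact (continuous_apply _).comp (hcont.comp (by fun_prop))
  have hval : ∀ z m k, F₁ z (Nat.pair m k) = f (denseSeq X m, z) k := fun z m k => by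
    simp [F₁]
  have hfiber : ∀ z z', F₁ z = F₁ z' → ∀ x, f (x, z) = f (x, z') := by
    intro z z' h
    have : (fun x => f (x, z)) = fun x => f (x, z') := by
      refine (denseRange_denseSeq X).equalizer (by fun_prop) (by fun_prop) ?_
      funext m k
      simpa only [hval, comp_apply] using congrFun h (Nat.pair m k)
    exact congrFun this
  have hrange : IsProperMap (rangeFactorization F₁) := by
    have hproj : Continuous fun (y : range F₁) (k : ℕ) => (y : ℕ → ℝ) (Nat.pair 0 k) :=
      continuous_pi fun k => (continuous_apply _).comp continuous_subtype_val
    refine isProperMap_of_comp_of_t2 (hF₁.subtype_mk _) hproj ?_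
    convert hproper.slice_right (denseSeq X 0) using 1
    funext z k
    exact hval z 0 k
  have hquot : IsQuotientMap (Prod.map (id : X → X) (rangeFactorization F₁)) := by
    have hprod := isProperMap_id.prodMap (X := X) hrange
    exact hprod.isClosedMap.isQuotientMap hprod.continuous
      (surjective_id.prodMap rangeFactorization_surjective)
  let F₂ : X × range F₁ → ℕ → ℝ := fun p => f (p.1, p.2.2.choose)
  have hF₂ : ∀ x z, f (x, z) = F₂ (x, ⟨F₁ z, ⟨z, rfl⟩⟩) := fun x z =>
    hfiber _ _ (Exists.choose_spec (⟨z, rfl⟩ : F₁ z ∈ range F₁)).symm x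
  refine ⟨F₁, hF₁, F₂, hquot.continuous_iff.2 ?_, hF₂⟩
  convert hcont using 1
  funext ⟨x, z⟩
  exact (hF₂ x z).symm
end

section
/- Let $X$ be a separable topological space, $A$ a countable dense subset of $X$, $Z$ a topological space, and $f:X\times Z\to \mathbb{R}^{\omega}$ a perfect map. Let $G_1:Z\to \mathbb{R}^{A\times\omega}$ be the diagonal product $G_1(z)=\langle f(a,z): a\in A\rangle$ of the maps $z\mapsto f(a,z)$ for $a\in A$. Then there exists a continuous map $G_2: X\times G_1(Z)\to \mathbb{R}^{\omega}$ such that $f=G_2\circ(\mathrm{id}_X\times G_1)$, where $G_1(Z)$ carries the subspace topology and $(\mathrm{id}_X\times G_1)(x,z)=(x,G_1(z))$. -/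
open TopologicalSpace Function Set Topology

/-- Factorization lemma, constructive form: for a perfect map `f : X × Z → ℝ^ω` and a countable
dense `A ⊆ X`, the diagonal product `G₁ = Δ{f_a : a ∈ A} : Z → ℝ^(A×ω)` admits a continuous
`G₂ : X × G₁(Z) → ℝ^ω` with `f = G₂ ∘ (id_X × G₁)`. -/
theorem stmt4 {X Z : Type*} [TopologicalSpace X] [TopologicalSpace Z]
    [T35Space X] [T35Space Z]
    [SeparableSpace X] (A : Set X) (hAc : A.Countable) (hAd : Dense A)
    (f : X × Z → ℕ → ℝ) (hf : IsPerfectMap f)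
    (G₁ : Z → A × ℕ → ℝ) (hG₁ : ∀ (z : Z) (a : A) (n : ℕ), G₁ z (a, n) = f (a.1, z) n) :
    ∃ G₂ : X × (Set.range G₁) → ℕ → ℝ, Continuous G₂ ∧
      ∀ (x : X) (z : Z), f (x, z) = G₂ (x, ⟨G₁ z, ⟨z, rfl⟩⟩) := by
  rcases isEmpty_or_nonempty X with hX | hX
  · exact ⟨fun p => (hX.false p.1).elim, continuous_of_const fun p => (hX.false p.1).elim,
      fun x => (hX.false x).elim⟩
  have hf_proper : IsProperMap f :=
    isProperMap_iff_isClosedMap_and_compact_fibers.2 ⟨hf.1, hf.2.1, fun b => hf.2.2 b⟩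
  obtain ⟨a, ha⟩ := hAd.nonempty
  have hG₁_cont : Continuous G₁ := by
    refine continuous_pi fun p => ?_
    simp only [hG₁]
    exact (continuous_apply p.2).comp (hf.1.comp (by fun_prop))
  have hG₁_proper : IsProperMap G₁ := by
    have h_range : IsClosed (range (Prod.mk a : Z → X × Z)) := by
      have h_eq : range (Prod.mk a : Z → X × Z) = Prod.fst ⁻¹' {a} := by
        ext ⟨x, z⟩
        simp [eq_comm]
      exact h_eq ▸ isClosed_singleton.preimage continuous_fst
    have h_slice : IsProperMap (fun z : Z => f (a, z)) :=
      hf_proper.comp (IsClosedEmbedding.mk (isEmbedding_prodMkRight a) h_range).isProperMap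
    refine isProperMap_of_comp_of_t2 (g := fun (y : A × ℕ → ℝ) n => y (⟨a, ha⟩, n))
      hG₁_cont (by fun_prop) ?_
    convert h_slice using 1
    ext z n
    exact hG₁ z ⟨a, ha⟩ n
  have h_factor : IsProperMap (rangeFactorization G₁) :=
    isProperMap_of_comp_of_inj (g := Subtype.val) hG₁_cont.rangeFactorization
      continuous_subtype_val hG₁_proper Subtype.val_injective
  have h_quot : IsQuotientMap (Prod.map (id : X → X) (rangeFactorization G₁)) := by
    have h := (isProperMap_id (X := X)).prodMap h_factor
    exact h.isClosedMap.isQuotientMap h.continuous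
      (surjective_id.prodMap rangeFactorization_surjective)
  have h_fiber : f.FactorsThrough (Prod.map id (rangeFactorization G₁)) := by
    rintro ⟨x, z⟩ ⟨y, w⟩ h
    obtain ⟨rfl, hzw⟩ := Prod.mk.inj h
    have hzw : G₁ z = G₁ w := congrArg Subtype.val hzw
    have h_eq : (fun x => f (x, z)) = fun x => f (x, w) :=
      Continuous.ext_on hAd (hf.1.comp (by fun_prop)) (hf.1.comp (by fun_prop))
        fun b hb => funext fun n => by
          rw [← hG₁ z ⟨b, hb⟩ n, hzw, hG₁]
    exact congrFun h_eq x
  obtain ⟨G₂, hG₂⟩ := (factorsThrough_iff f).1 h_fiber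
  exact ⟨G₂, h_quot.continuous_iff.2 (hG₂ ▸ hf.1), fun x z => congrFun hG₂ (x, z)⟩
end

section
/- Let $\tau$ be an ordinal of uncountable cofinality, viewed as the topological space of all ordinals strictly below $\tau$ with the order topology, let $M$ be a separable metrizable space, and let $f:\tau\to M$ be a continuous surjection. Then for any topological space $X$, the map $\mathrm{id}_X\times f: X\times\tau\to X\times M$, $(x,\alpha)\mapsto (x,f(\alpha))$, is a quotient map. -/
open TopologicalSpace Function Set Topology

universe u v

/-- A continuous surjection `f : A → M` onto a Hausdorff space that maps some compact subset of `A`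
onto `M` stays a quotient map after taking the product with the identity of any space. -/
theorem IsCompact.isQuotientMap_prodMap_id {A M X : Type*} [TopologicalSpace A]
    [TopologicalSpace M] [T2Space M] [TopologicalSpace X] {f : A → M} (hf : Continuous f)
    {K : Set A} (hK : IsCompact K) (hKf : f '' K = univ) :
    IsQuotientMap (Prod.map (id : X → X) f) := by
  have : CompactSpace K := isCompact_iff_compactSpace.1 hK
  have hg : Continuous (f ∘ ((↑) : K → A)) := hf.comp continuous_subtype_val
  have hg_surj : Surjective (f ∘ ((↑) : K → A)) := by
    rw [← range_eq_univ, range_comp, Subtype.range_coe, hKf]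
  have hp : IsProperMap (Prod.map (id : X → X) (f ∘ ((↑) : K → A))) :=
    isProperMap_id.prodMap hg.isProperMap
  have hq := hp.isClosedMap.isQuotientMap hp.continuous (surjective_id.prodMap hg_surj)
  exact IsQuotientMap.of_comp (f := Prod.map (id : X → X) ((↑) : K → A))
    (continuous_id.prodMap continuous_subtype_val) (continuous_id.prodMap hf) hq

/-- A continuous surjection from an ordinal of uncountable cofinality onto a separable Hausdorff
space maps some compact subset onto the whole space. -/
theorem exists_isCompact_image_eq_univ_of_aleph0_lt_cof {τ : Ordinal.{u}}
    (hτ : Cardinal.aleph0 < τ.cof) {M : Type u} [TopologicalSpace M] [T2Space M] [SeparableSpace M]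
    {f : Set.Iio τ → M} (hf : Continuous f) (hsurj : Surjective f) :
    ∃ K : Set (Set.Iio τ), IsCompact K ∧ f '' K = univ := by
  obtain ⟨D, hDc, hD⟩ := exists_countable_dense M
  choose g hg using hsurj
  have hγ : ⨆ d : D, (g d : Ordinal.{u}) < τ :=
    Ordinal.iSup_lt_of_lt_cof (hDc.le_aleph0.trans_lt hτ) fun d => (g d).2
  set γ := ⨆ d : D, (g d : Ordinal.{u})
  have hK : IsCompact ((↑) ⁻¹' Icc 0 γ : Set (Set.Iio τ)) := by
    rw [Subtype.isCompact_iff, Subtype.image_preimage_coe,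
      inter_eq_right.2 fun x hx => hx.2.trans_lt hγ]
    exact isCompact_Icc
  refine ⟨_, hK, ?_⟩
  rw [← (hK.image hf).isClosed.closure_eq]
  refine Dense.closure_eq (hD.mono fun d hd => ⟨g d, ⟨zero_le, ?_⟩, hg d⟩)
  exact Ordinal.le_iSup (fun d : D => (g d : Ordinal.{u})) ⟨d, hd⟩

/-- If `τ` has uncountable cofinality, `M` is separable metrizable, and `f : τ → M` is a
continuous surjection, then `id_X × f : X × τ → X × M` is a quotient map for every `X`. -/
theorem stmt6 (τ : Ordinal.{u}) (hτ : Cardinal.aleph0 < τ.cof)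
    {M : Type u} [TopologicalSpace M] [MetrizableSpace M] [SeparableSpace M]
    (f : Set.Iio τ → M) (hf : Continuous f) (hsurj : Function.Surjective f)
    (X : Type v) [TopologicalSpace X] [T35Space X] :
    Topology.IsQuotientMap (Prod.map (id : X → X) f) := by
  obtain ⟨K, hK, hKf⟩ := exists_isCompact_image_eq_univ_of_aleph0_lt_cof hτ hf hsurj
  exact hK.isQuotientMap_prodMap_id hf hKf
end

section
/- Let $\tau$ be an ordinal of uncountable cofinality, viewed as the topological space of all ordinals strictly below $\tau$ with the order topology, let $M$ be a separable metrizable space, and let $f:\tau\to M$ be continuous. Then there exists a compact separable subspace $C\subseteq\tau$ such that $f(C)=f(\tau)$. -/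
open TopologicalSpace Function Set Topology

universe u

/-- A countable subset of an ordinal of uncountable cofinality is bounded. -/
theorem Ordinal.bddAbove_of_countable_of_aleph0_lt_cof {τ : Ordinal.{u}}
    (hτ : Cardinal.aleph0 < τ.cof) {A : Set (Set.Iio τ)} (hA : A.Countable) : BddAbove A := by
  have hsmall : Small.{u} (Subtype.val '' A : Set Ordinal.{u}) :=
    have := (hA.image Subtype.val).to_subtype
    Countable.toSmall _
  have hlt : sSup (Subtype.val '' A) < τ := by
    refine Ordinal.sSup_lt_of_lt_cof ?_ ?_
    · refine (Cardinal.le_aleph0_iff_set_countable.2 (hA.image Subtype.val)).trans_lt ?_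
      simpa [← Ordinal.lift_cof] using hτ
    · rintro _ ⟨x, -, rfl⟩
      exact x.2
  refine ⟨⟨_, hlt⟩, fun x hx => ?_⟩
  exact le_csSup Ordinal.bddAbove_of_small (mem_image_of_mem Subtype.val hx)

/-- Closed initial segments of an ordinal are compact. -/
theorem Ordinal.isCompact_Iic_subtype {τ : Ordinal.{u}} (b : Set.Iio τ) :
    IsCompact (Set.Iic b) := by
  have hcompact : IsCompact (Set.Iic b.1) := by
    rw [← Set.Icc_bot]
    exact isCompact_Icc
  refine (IsInducing.subtypeVal.isCompact_preimage_iff ?_).2 hcompact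
  rw [Subtype.range_coe]
  exact Set.Iic_subset_Iio.2 b.2

/-- If `τ` has uncountable cofinality and `f : τ → M` is continuous into a separable
metrizable space `M`, then there is a compact separable subspace `C ⊆ τ` with `f(C) = f(τ)`. -/
theorem stmt7 (τ : Ordinal.{u}) (hτ : Cardinal.aleph0 < τ.cof)
    {M : Type u} [TopologicalSpace M] [MetrizableSpace M] [SeparableSpace M]
    (f : Set.Iio τ → M) (hf : Continuous f) :
    ∃ C : Set (Set.Iio τ), IsCompact C ∧ TopologicalSpace.IsSeparable C ∧
      f '' C = Set.range f := by
  obtain ⟨D, hDf, hDc, hD⟩ :=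
    (IsSeparable.of_separableSpace (range f)).exists_countable_dense_subset
  obtain ⟨A, hAc, rfl⟩ : ∃ A : Set (Set.Iio τ), A.Countable ∧ f '' A = D := by
    obtain ⟨A, rfl, hA⟩ := exists_image_eq_injOn_of_subset_range hDf
    exact ⟨A, countable_of_injective_of_countable_image hA hDc, rfl⟩
  obtain ⟨b, hb⟩ := Ordinal.bddAbove_of_countable_of_aleph0_lt_cof hτ hAc
  have hC : IsCompact (closure A) :=
    (Ordinal.isCompact_Iic_subtype b).of_isClosed_subset isClosed_closure
      (closure_minimal hb isClosed_Iic)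
  refine ⟨closure A, hC, ⟨A, hAc, Subset.rfl⟩, (image_subset_range f _).antisymm ?_⟩
  exact hD.trans (closure_minimal (image_mono subset_closure) (hC.image hf).isClosed)
end

section
/- Let $X=\mathbb{R}$ be the space of real numbers, let $Y=\mathbb{P}$ be the space of irrational numbers with the subspace topology from $\mathbb{R}$, and let $Z=X^{\omega}\times Y^{\omega}$ with the product topology. Then $C_p(X\times Z)$ is homeomorphic to $C_p(Y\times Z)$. -/
open TopologicalSpace Function Set Topology

/-- Prepending a term to a sequence, as a homeomorphism `A × A^ω ≃ₜ A^ω`. -/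
def seqConsHomeomorph (A : Type*) [TopologicalSpace A] : A × (ℕ → A) ≃ₜ (ℕ → A) where
  toFun p n := Nat.casesOn n p.1 p.2
  invFun s := (s 0, fun n => s (n + 1))
  left_inv _ := rfl
  right_inv s := by
    funext n
    cases n <;> rfl
  continuous_toFun := continuous_pi fun n => by
    cases n with
    | zero => exact continuous_fst
    | succ n => exact (continuous_apply n).comp continuous_snd
  continuous_invFun := by fun_prop

/-- The factor `A^ω` of `A^ω × B` absorbs a further factor `A`. -/
def prodSeqProdHomeomorph (A B : Type*) [TopologicalSpace A] [TopologicalSpace B] :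
    A × ((ℕ → A) × B) ≃ₜ (ℕ → A) × B :=
  (Homeomorph.prodAssoc A (ℕ → A) B).symm.trans
    ((seqConsHomeomorph A).prodCongr (Homeomorph.refl B))

/-- A homeomorphism of spaces induces a homeomorphism of their function spaces. -/
def Homeomorph.cpCongr {S T : Type*} [TopologicalSpace S] [TopologicalSpace T] (e : S ≃ₜ T) :
    Cp S ≃ₜ Cp T where
  toFun f := ⟨f.1 ∘ e.symm, f.2.comp e.symm.continuous⟩
  invFun g := ⟨g.1 ∘ e, g.2.comp e.continuous⟩
  left_inv f := Subtype.ext <| funext fun x => congrArg f.1 (e.symm_apply_apply x)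
  right_inv g := Subtype.ext <| funext fun y => congrArg g.1 (e.apply_symm_apply y)
  continuous_toFun := by
    refine Continuous.subtype_mk (continuous_pi fun y => ?_) _
    exact (continuous_apply (e.symm y)).comp continuous_subtype_val
  continuous_invFun := by
    refine Continuous.subtype_mk (continuous_pi fun x => ?_) _
    exact (continuous_apply (e x)).comp continuous_subtype_val

/-- With `X = ℝ`, `Y` the irrationals, and `Z = X^ω × Y^ω`, the spaces `Cp (X × Z)` and
`Cp (Y × Z)` are homeomorphic. -/
theorem stmt10 :
    Nonempty
      (Cp (ℝ × ((ℕ → ℝ) × (ℕ → {x : ℝ // Irrational x}))) ≃ₜ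
       Cp ({x : ℝ // Irrational x} × ((ℕ → ℝ) × (ℕ → {x : ℝ // Irrational x})))) := by
  let P := {x : ℝ // Irrational x}
  let absorbReal := prodSeqProdHomeomorph ℝ (ℕ → P)
  let absorbIrrational : P × ((ℕ → ℝ) × (ℕ → P)) ≃ₜ (ℕ → ℝ) × (ℕ → P) :=
    ((Homeomorph.refl P).prodCongr (Homeomorph.prodComm _ _)).trans
      ((prodSeqProdHomeomorph P (ℕ → ℝ)).trans (Homeomorph.prodComm _ _))
  exact ⟨(absorbReal.trans absorbIrrational.symm).cpCongr⟩
end
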